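/- Let d ≥ 1 and let μ, ν be Borel probability measures on ℝ^d with finite first moments. Then the infimum, taken over all convex functions f : ℝ^d → ℝ that are integrable with respect to both μ and ν, of (∫ f dν − ∫ f dμ), equals the infimum over all Borel probability measures ρ on ℝ^d with bounded support of (C(ν,ρ) − C(μ,ρ)), where both infima are taken in the extended reals [−∞, ∞]. -/

import Mathlib

open MeasureTheory Metric RealInnerProductSpace

noncomputable section

/-- The set of couplings of two measures on `ℝ^d`. -/
def Couplings {d : ℕ} (α β : Measure (EuclideanSpace ℝ (Fin d))) :
    Set (Measure (EuclideanSpace ℝ (Fin d) × EuclideanSpace ℝ (Fin d))) :=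
  {π | π.map Prod.fst = α ∧ π.map Prod.snd = β}

/-- `C(α,β) = sup_{π ∈ Π(α,β)} ∫ ⟨x,y⟩ dπ`. -/
def OTcost {d : ℕ} (α β : Measure (EuclideanSpace ℝ (Fin d))) : ℝ :=
  sSup {r : ℝ | ∃ π ∈ Couplings α β, r = ∫ p, ⟪p.1, p.2⟫ ∂π}

/-!
For compact `K` and `g ∈ C(K)`, the function `f_g(x) = max_{y ∈ K} (⟪x, y⟫ + g(y))` is convex, and
integrating `⟪x, y⟫ ≤ f_g(x) - g(y)` against couplings gives the weak duality
`C(α, ρ) ≤ ∫ f_g dα - ∫ g dρ` for every probability measure `ρ` on `K`.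

Given `ρ`, strong duality lets us choose `g` with `∫ f_g dν - ∫ g dρ` as close as we like to
`C(ν, ρ)`; subtracting weak duality for `(μ, ρ)` bounds `∫ f_g dν - ∫ f_g dμ` from above. Strong
duality itself is Hahn–Banach below the sublinear functional `h ↦ ∫ sup_y h(x, y) dν(x)`, the value
on functions of `y` alone being prescribed by `ρ`; the Riesz representation theorem turns the
resulting functional into an optimal coupling.

Conversely, a convex `f` is the increasing limit of functions `f_g` with `K` finite. Taking for `ρ`
the law under `μ` of a slope attaining the maximum, weak duality for `(μ, ρ)` is an equality, so
that weak duality for `(ν, ρ)` gives `C(ν, ρ) - C(μ, ρ) ≤ ∫ f_g dν - ∫ f_g dμ`.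
-/

open Filter Topology
open scoped CompactlySupported BoundedContinuousFunction

section HahnBanach

variable {V W : Type*} [AddCommGroup V] [Module ℝ V] [AddCommGroup W] [Module ℝ W]

theorem map_zero_of_map_pos_smul {N : V → ℝ}
    (N_hom : ∀ c : ℝ, 0 < c → ∀ x, N (c • x) = c * N x) : N 0 = 0 := by
  have := N_hom 2 two_pos 0
  rw [smul_zero] at this
  linarith

theorem exists_linearMap_le_sublinear_eq {N : V → ℝ}
    (N_hom : ∀ c : ℝ, 0 < c → ∀ x, N (c • x) = c * N x)
    (N_add : ∀ x y, N (x + y) ≤ N x + N y) (v : V) :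
    ∃ L : V →ₗ[ℝ] ℝ, (∀ x, L x ≤ N x) ∧ L v = N v := by
  have N_zero : N 0 = 0 := map_zero_of_map_pos_smul N_hom
  have N_smul_ge (t : ℝ) : t * N v ≤ N (t • v) := by
    rcases lt_trichotomy t 0 with ht | rfl | ht
    · have h_neg := N_hom (-t) (neg_pos.2 ht) v
      have h_add := N_add (t • v) (-t • v)
      rw [← add_smul, add_neg_cancel, zero_smul, N_zero] at h_add
      linarith
    · simp [N_zero]
    · exact (N_hom t ht v).ge
  have well_defined (t : ℝ) (ht : t • v = 0) : t • N v = 0 := by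
    rcases smul_eq_zero.1 ht with rfl | rfl <;> simp [N_zero]
  obtain ⟨L, hL_ext, hL_le⟩ := exists_extension_of_le_sublinear
    (LinearPMap.mkSpanSingleton' (σ := RingHom.id ℝ) v (N v) well_defined) N N_hom N_add (by
      rintro ⟨x, hx⟩
      obtain ⟨t, rfl⟩ := Submodule.mem_span_singleton.1 hx
      rw [LinearPMap.mkSpanSingleton'_apply]
      exact N_smul_ge t)
  refine ⟨L, hL_le, (hL_ext ⟨v, Submodule.mem_span_singleton_self v⟩).trans ?_⟩
  exact LinearPMap.mkSpanSingleton'_apply_self v (N v) well_defined _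

/-- The largest sublinear functional below `N` whose composition with `j` is at most `ℓ`: the
linear functionals below it are those below `N` that extend `ℓ` along `j`. -/
def sublinearRelaxation (N : V → ℝ) (j : W →ₗ[ℝ] V) (ℓ : W →ₗ[ℝ] ℝ) (v : V) : ℝ :=
  ⨅ w, (N (v + j w) - ℓ w)

variable {N : V → ℝ} {j : W →ₗ[ℝ] V} {ℓ : W →ₗ[ℝ] ℝ}

theorem sublinearRelaxation_le (N_add : ∀ x y, N (x + y) ≤ N x + N y)
    (hℓ : ∀ w, ℓ w ≤ N (j w)) (v : V) (w : W) :
    sublinearRelaxation N j ℓ v ≤ N (v + j w) - ℓ w := by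
  refine ciInf_le ⟨-N (-v), ?_⟩ w
  rintro _ ⟨w, rfl⟩
  have := N_add (v + j w) (-v)
  rw [add_neg_cancel_comm] at this
  linarith [hℓ w]

theorem sublinearRelaxation_smul (N_hom : ∀ c : ℝ, 0 < c → ∀ x, N (c • x) = c * N x) {c : ℝ}
    (hc : 0 < c) (v : V) :
    sublinearRelaxation N j ℓ (c • v) = c * sublinearRelaxation N j ℓ v := by
  have h_scale (w : W) : N (c • v + j (c • w)) - ℓ (c • w) = c * (N (v + j w) - ℓ w) := by
    rw [map_smul, map_smul, ← smul_add, N_hom c hc, smul_eq_mul, mul_sub]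
  rw [sublinearRelaxation, ← (MulAction.bijective₀ hc.ne').surjective.iInf_comp,
    sublinearRelaxation, Real.mul_iInf_of_nonneg hc.le]
  simp only [h_scale]

theorem sublinearRelaxation_add_le (N_add : ∀ x y, N (x + y) ≤ N x + N y)
    (hℓ : ∀ w, ℓ w ≤ N (j w)) (v₁ v₂ : V) :
    sublinearRelaxation N j ℓ (v₁ + v₂) ≤
      sublinearRelaxation N j ℓ v₁ + sublinearRelaxation N j ℓ v₂ := by
  refine le_ciInf_add_ciInf fun w₁ w₂ => ?_
  calc sublinearRelaxation N j ℓ (v₁ + v₂)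
      ≤ N (v₁ + v₂ + j (w₁ + w₂)) - ℓ (w₁ + w₂) := sublinearRelaxation_le N_add hℓ _ _
    _ = N ((v₁ + j w₁) + (v₂ + j w₂)) - (ℓ w₁ + ℓ w₂) := by
        rw [map_add, map_add, add_add_add_comm]
    _ ≤ N (v₁ + j w₁) - ℓ w₁ + (N (v₂ + j w₂) - ℓ w₂) := by
        linarith [N_add (v₁ + j w₁) (v₂ + j w₂)]

theorem exists_extension_le_sublinear_eq_sublinearRelaxation
    (N_hom : ∀ c : ℝ, 0 < c → ∀ x, N (c • x) = c * N x)
    (N_add : ∀ x y, N (x + y) ≤ N x + N y) (hℓ : ∀ w, ℓ w ≤ N (j w)) (v : V) :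
    ∃ L : V →ₗ[ℝ] ℝ, (∀ x, L x ≤ N x) ∧ (∀ w, L (j w) = ℓ w) ∧
      L v = sublinearRelaxation N j ℓ v := by
  obtain ⟨L, hL_le, hLv⟩ := exists_linearMap_le_sublinear_eq
    (fun c hc x => sublinearRelaxation_smul (j := j) (ℓ := ℓ) N_hom hc x)
    (sublinearRelaxation_add_le N_add hℓ) v
  have hL (x : V) (w : W) : L x ≤ N (x + j w) - ℓ w :=
    (hL_le x).trans (sublinearRelaxation_le N_add hℓ x w)
  have N_zero : N 0 = 0 := map_zero_of_map_pos_smul N_hom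
  have hL_j (w : W) : L (j w) ≤ ℓ w := by simpa [N_zero] using hL (j w) (-w)
  refine ⟨L, fun x => by simpa using hL x 0, fun w => (hL_j w).antisymm ?_, hLv⟩
  simpa using hL_j (-w)

end HahnBanach

section CompactSup

variable {Y : Type*} [TopologicalSpace Y] [CompactSpace Y]

theorem le_iSup_of_compactSpace (g : C(Y, ℝ)) (y : Y) : g y ≤ ⨆ y, g y :=
  le_ciSup (isCompact_range g.continuous).bddAbove y

theorem integrable_continuousMap_of_compactSpace [MeasurableSpace Y] [OpensMeasurableSpace Y]
    (ρ : Measure Y) [IsFiniteMeasure ρ] (g : C(Y, ℝ)) : Integrable g ρ :=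
  BoundedContinuousFunction.integrable ρ (.mkOfCompact g)

variable [Nonempty Y]

theorem abs_iSup_sub_iSup_le_norm (g₁ g₂ : C(Y, ℝ)) : |(⨆ y, g₁ y) - ⨆ y, g₂ y| ≤ ‖g₁ - g₂‖ := by
  have iSup_le (u v : C(Y, ℝ)) : ⨆ y, u y ≤ (⨆ y, v y) + ‖u - v‖ := ciSup_le fun y => by
    have := (le_abs_self _).trans ((u - v).norm_coe_le_norm y)
    rw [ContinuousMap.sub_apply] at this
    linarith [le_iSup_of_compactSpace v y]
  rw [abs_sub_le_iff]
  exact ⟨by linarith [iSup_le g₁ g₂], by linarith [iSup_le g₂ g₁, norm_sub_rev g₁ g₂]⟩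

theorem abs_iSup_le_norm (g : C(Y, ℝ)) : |⨆ y, g y| ≤ ‖g‖ := by
  simpa using abs_iSup_sub_iSup_le_norm g 0

theorem continuous_iSup_of_compactSpace : Continuous fun g : C(Y, ℝ) => ⨆ y, g y :=
  (LipschitzWith.of_dist_le_mul (K := 1) fun g₁ g₂ => by
    simpa [dist_eq_norm] using abs_iSup_sub_iSup_le_norm g₁ g₂).continuous

variable {Ω : Type*} [MeasurableSpace Ω] {ν : Measure Ω}

theorem integrable_iSup_of_compactSpace {h : Ω → C(Y, ℝ)} (hh : Integrable h ν) :
    Integrable (fun x => ⨆ y, h x y) ν :=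
  hh.norm.mono' (continuous_iSup_of_compactSpace.comp_aestronglyMeasurable hh.1)
    (ae_of_all _ fun x => abs_iSup_le_norm (h x))

end CompactSup

section IntegrableMap

variable {X : Type*} [TopologicalSpace X] [MeasurableSpace X] (F : Type*) [NormedAddCommGroup F]
  [NormedSpace ℝ F]

/-- The space of continuous maps `X → F` that are Bochner integrable. For `F = C(Y, ℝ)` with `Y`
compact it consists of the continuous functions of two variables `(x, y)` whose supremum over `y`
in absolute value is integrable in `x`, the test functions of the duality argument. -/
def integrableMap (ν : Measure X) : Submodule ℝ C(X, F) where
  carrier := {h | Integrable h ν}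
  add_mem' := Integrable.add
  zero_mem' := integrable_zero X F ν
  smul_mem' c _ h := h.smul c

/-- Vectors of `F` as constant elements of `integrableMap F ν`. -/
def constMap (ν : Measure X) [IsFiniteMeasure ν] : F →ₗ[ℝ] integrableMap F ν where
  toFun v := ⟨.const X v, integrable_const v⟩
  map_add' _ _ := rfl
  map_smul' _ _ := rfl

variable {F} in
theorem constMap_apply (ν : Measure X) [IsFiniteMeasure ν] (v : F) (x : X) :
    (constMap F ν v).1 x = v :=
  rfl

end IntegrableMap

section SupIntegral

variable {X Y : Type*} [TopologicalSpace X] [MeasurableSpace X] {ν : Measure X}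
  [TopologicalSpace Y] [CompactSpace Y]

/-- The sublinear functional `h ↦ ∫ sup_y h(x, y) dν(x)`. The linear functionals below it are
integration against the measures on `X × Y` with first marginal `ν`. -/
def supIntegral (h : integrableMap C(Y, ℝ) ν) : ℝ := ∫ x, ⨆ y, h.1 x y ∂ν

theorem supIntegral_smul {c : ℝ} (hc : 0 < c) (h : integrableMap C(Y, ℝ) ν) :
    supIntegral (c • h) = c * supIntegral h := by
  rw [supIntegral, supIntegral, ← integral_const_mul]
  refine integral_congr_ae (ae_of_all _ fun x => ?_)
  exact (Real.mul_iSup_of_nonneg hc.le fun y => h.1 x y).symm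

theorem integral_le_supIntegral_constMap [IsProbabilityMeasure ν] [MeasurableSpace Y]
    [OpensMeasurableSpace Y] (ρ : Measure Y) [IsProbabilityMeasure ρ] (g : C(Y, ℝ)) :
    ∫ y, g y ∂ρ ≤ supIntegral (constMap C(Y, ℝ) ν g) := by
  have h_sup : supIntegral (constMap C(Y, ℝ) ν g) = ⨆ y, g y := by
    simp [supIntegral, constMap_apply]
  rw [h_sup]
  simpa using integral_mono (integrable_continuousMap_of_compactSpace ρ g)
    (integrable_const (⨆ y, g y)) (le_iSup_of_compactSpace g)

variable [Nonempty Y]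

theorem supIntegral_add_le (h₁ h₂ : integrableMap C(Y, ℝ) ν) :
    supIntegral (h₁ + h₂) ≤ supIntegral h₁ + supIntegral h₂ := by
  have hi (h : integrableMap C(Y, ℝ) ν) : Integrable (fun x => ⨆ y, h.1 x y) ν :=
    integrable_iSup_of_compactSpace h.2
  refine (integral_mono (hi _) ((hi h₁).add (hi h₂)) fun x => ciSup_le fun y => ?_).trans_eq
    (integral_add (hi h₁) (hi h₂))
  exact add_le_add (le_iSup_of_compactSpace (h₁.1 x) y) (le_iSup_of_compactSpace (h₂.1 x) y)

theorem supIntegral_le_integral_norm (h : integrableMap C(Y, ℝ) ν) :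
    supIntegral h ≤ ∫ x, ‖h.1 x‖ ∂ν :=
  integral_mono (integrable_iSup_of_compactSpace h.2) (Integrable.norm h.2) fun x =>
    (le_abs_self _).trans (abs_iSup_le_norm (h.1 x))

theorem supIntegral_nonpos {h : integrableMap C(Y, ℝ) ν} (hh : ∀ x y, h.1 x y ≤ 0) :
    supIntegral h ≤ 0 :=
  integral_nonpos fun x => ciSup_le (hh x)

end SupIntegral

theorem integrable_of_nonneg_of_tendsto_integral {Ω : Type*} [MeasurableSpace Ω] {μ : Measure Ω}
    {F : ℕ → Ω → ℝ} {f : Ω → ℝ} {l : ℝ} (hF : ∀ n, Integrable (F n) μ)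
    (hF_nonneg : ∀ n x, 0 ≤ F n x) (hf : AEStronglyMeasurable f μ)
    (h_lim : ∀ x, Tendsto (fun n => F n x) atTop (𝓝 (f x)))
    (h_integral : Tendsto (fun n => ∫ x, F n x ∂μ) atTop (𝓝 l)) : Integrable f μ := by
  refine ⟨hf, ?_⟩
  have enorm_integral (n : ℕ) : ∫⁻ x, ‖F n x‖ₑ ∂μ = ENNReal.ofReal (∫ x, F n x ∂μ) := by
    rw [ofReal_integral_eq_lintegral_ofReal (hF n) (ae_of_all _ (hF_nonneg n))]
    simp only [Real.enorm_of_nonneg (hF_nonneg n _)]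
  calc ∫⁻ x, ‖f x‖ₑ ∂μ = ∫⁻ x, liminf (fun n => ‖F n x‖ₑ) atTop ∂μ := by
        simp only [(h_lim _).enorm.liminf_eq]
    _ ≤ liminf (fun n => ∫⁻ x, ‖F n x‖ₑ ∂μ) atTop :=
        lintegral_liminf_le' fun n => (hF n).1.aemeasurable.enorm
    _ = ENNReal.ofReal l := by
        simp only [enorm_integral]
        exact ((ENNReal.continuous_ofReal.tendsto l).comp h_integral).liminf_eq
    _ < ⊤ := ENNReal.ofReal_lt_top

section Riesz

variable {X Y : Type*} [TopologicalSpace X] [TopologicalSpace Y] [CompactSpace Y]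
  [T2Space Y]

theorem exists_seq_hasCompactSupport_eventually_eq_one [T2Space X] [LocallyCompactSpace X]
    [SigmaCompactSpace X] :
    ∃ χ : ℕ → C(X, ℝ), (∀ n, HasCompactSupport (χ n)) ∧ (∀ n x, χ n x ∈ Set.Icc 0 1) ∧
      ∀ x, ∀ᶠ n in atTop, χ n x = 1 := by
  let K : CompactExhaustion X := default
  choose χ hχ_one _ hχ_supp hχ_mem using fun n =>
    exists_continuous_one_zero_of_isCompact (K.isCompact n) isClosed_empty (Set.disjoint_empty _)
  refine ⟨χ, hχ_supp, hχ_mem, fun x => ?_⟩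
  obtain ⟨m, hm⟩ := K.exists_mem x
  filter_upwards [eventually_ge_atTop m] with n hn using hχ_one n (K.subset hn hm)

/-- The compactly supported function `(x, y) ↦ χ(x) h(x, y)`, for a cutoff `χ` in the first
variable. -/
def cutoffMul [T2Space X] (χ : C(X, ℝ)) (hχ : HasCompactSupport χ) (h : C(X, C(Y, ℝ))) :
    C_c(X × Y, ℝ) where
  toFun p := χ p.1 * h p.1 p.2
  continuous_toFun := (χ.continuous.comp continuous_fst).mul h.uncurry.continuous
  hasCompactSupport' := by
    refine HasCompactSupport.intro (hχ.isCompact.prod isCompact_univ) fun p hp => ?_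
    have : p.1 ∉ tsupport χ := fun h1 => hp ⟨h1, Set.mem_univ _⟩
    rw [image_eq_zero_of_notMem_tsupport this, zero_mul]

theorem cutoffMul_apply [T2Space X] (χ : C(X, ℝ)) (hχ : HasCompactSupport χ) (h : C(X, C(Y, ℝ)))
    (p : X × Y) : cutoffMul χ hχ h p = χ p.1 * h p.1 p.2 :=
  rfl

variable [SecondCountableTopology X] [MeasurableSpace X] [OpensMeasurableSpace X]

/-- Compactly supported functions on `X × Y` as integrable maps `X → C(Y, ℝ)`. -/
def curryIntegrable (ν : Measure X) [IsFiniteMeasure ν] :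
    C_c(X × Y, ℝ) →ₗ[ℝ] integrableMap C(Y, ℝ) ν where
  toFun k := ⟨k.toContinuousMap.curry, by
    obtain ⟨C, hC⟩ := k.hasCompactSupport.exists_bound_of_continuous k.continuous
    exact .of_bound k.toContinuousMap.curry.continuous.aestronglyMeasurable (max C 0)
      (ae_of_all _ fun x => (ContinuousMap.norm_le _ (le_max_right _ _)).2 fun y =>
        (hC (x, y)).trans (le_max_left _ _))⟩
  map_add' _ _ := rfl
  map_smul' _ _ := rfl

theorem exists_integrableMap_eq_abs {ν : Measure X} (h : integrableMap C(Y, ℝ) ν) :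
    ∃ k : integrableMap C(Y, ℝ) ν, ∀ x y, k.1 x y = |h.1 x y| :=
  ⟨⟨|h.1.uncurry|.curry, Integrable.mono (g := h.1) h.2
    |h.1.uncurry|.curry.continuous.aestronglyMeasurable (ae_of_all _ fun x =>
      (ContinuousMap.norm_le _ (norm_nonneg _)).2 fun y =>
        (norm_norm _).trans_le ((h.1 x).norm_coe_le_norm y))⟩, fun _ _ => rfl⟩

variable [T2Space X]

theorem tendsto_map_curryIntegrable_cutoffMul {ν : Measure X} [IsFiniteMeasure ν]
    {L : integrableMap C(Y, ℝ) ν →ₗ[ℝ] ℝ} (hL : ∀ h, L h ≤ ∫ x, ‖h.1 x‖ ∂ν) {χ : ℕ → C(X, ℝ)}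
    (hχ : ∀ n, HasCompactSupport (χ n)) (hχ_mem : ∀ n x, χ n x ∈ Set.Icc 0 1)
    (hχ_one : ∀ x, ∀ᶠ n in atTop, χ n x = 1) (h : integrableMap C(Y, ℝ) ν) :
    Tendsto (fun n => L (curryIntegrable ν (cutoffMul (χ n) (hχ n) h.1))) atTop (𝓝 (L h)) := by
  set u : ℕ → integrableMap C(Y, ℝ) ν := fun n =>
    curryIntegrable ν (cutoffMul (χ n) (hχ n) h.1) - h
  have hu (n : ℕ) (x : X) : (u n).1 x = (χ n x - 1) • h.1 x := by
    ext y
    exact (sub_one_mul (χ n x) (h.1 x y)).symm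
  have abs_map_le (n : ℕ) : ‖L (u n)‖ ≤ ∫ x, ‖(u n).1 x‖ ∂ν := by
    refine abs_le'.2 ⟨hL _, ?_⟩
    simpa using hL (-u n)
  have tendsto_norm : Tendsto (fun n => ∫ x, ‖(u n).1 x‖ ∂ν) atTop (𝓝 0) := by
    rw [← integral_zero X ℝ (μ := ν)]
    refine tendsto_integral_of_dominated_convergence (fun x => ‖h.1 x‖)
      (fun n => (u n).1.continuous.norm.aestronglyMeasurable) (Integrable.norm h.2)
      (fun n => ae_of_all _ fun x => ?_) (ae_of_all _ fun x => ?_)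
    · rw [norm_norm, hu, norm_smul, Real.norm_eq_abs]
      refine mul_le_of_le_one_left (norm_nonneg _) (abs_le.2 ⟨?_, ?_⟩) <;>
        linarith [(hχ_mem n x).1, (hχ_mem n x).2]
    · refine tendsto_const_nhds.congr' ?_
      filter_upwards [hχ_one x] with n hn
      simp [hu, hn]
  refine tendsto_sub_nhds_zero_iff.1 ?_
  simpa only [u, map_sub] using squeeze_zero_norm abs_map_le tendsto_norm

variable [LocallyCompactSpace X] [BorelSpace X] [MeasurableSpace Y] [BorelSpace Y]

theorem exists_measure_forall_integral_compactlySupported_eq {ν : Measure X} [IsFiniteMeasure ν]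
    (L : integrableMap C(Y, ℝ) ν →ₗ[ℝ] ℝ) (hL_nonneg : ∀ h, (∀ x y, 0 ≤ h.1 x y) → 0 ≤ L h) :
    ∃ π : Measure (X × Y), IsFiniteMeasureOnCompacts π ∧
      ∀ k : C_c(X × Y, ℝ), ∫ p, k p ∂π = L (curryIntegrable ν k) :=
  let Λ : C_c(X × Y, ℝ) →ₚ[ℝ] ℝ := .mk₀ (L ∘ₗ curryIntegrable ν) fun _ hk =>
    hL_nonneg _ fun x y => hk (x, y)
  ⟨RealRMK.rieszMeasure Λ, inferInstance, fun k => RealRMK.integral_rieszMeasure Λ k⟩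

theorem exists_measure_forall_integral_eq {ν : Measure X} [IsFiniteMeasure ν]
    (L : integrableMap C(Y, ℝ) ν →ₗ[ℝ] ℝ) (hL_nonneg : ∀ h, (∀ x y, 0 ≤ h.1 x y) → 0 ≤ L h)
    (hL_le : ∀ h, L h ≤ ∫ x, ‖h.1 x‖ ∂ν) :
    ∃ π : Measure (X × Y), ∀ h : integrableMap C(Y, ℝ) ν,
      Integrable (fun p => h.1 p.1 p.2) π ∧ ∫ p, h.1 p.1 p.2 ∂π = L h := by
  obtain ⟨χ, hχ, hχ_mem, hχ_one⟩ := exists_seq_hasCompactSupport_eventually_eq_one (X := X)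
  obtain ⟨π, _, hπ⟩ := exists_measure_forall_integral_compactlySupported_eq L hL_nonneg
  have measurable (h : integrableMap C(Y, ℝ) ν) :
      AEStronglyMeasurable (fun p : X × Y => h.1 p.1 p.2) π :=
    h.1.uncurry.continuous.aestronglyMeasurable
  have tendsto_L (h : integrableMap C(Y, ℝ) ν) :
      Tendsto (fun n => ∫ p, cutoffMul (χ n) (hχ n) h.1 p ∂π) atTop (𝓝 (L h)) := by
    simpa only [hπ] using tendsto_map_curryIntegrable_cutoffMul hL_le hχ hχ_mem hχ_one h
  have tendsto_cutoffMul (h : integrableMap C(Y, ℝ) ν) (p : X × Y) :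
      Tendsto (fun n => cutoffMul (χ n) (hχ n) h.1 p) atTop (𝓝 (h.1 p.1 p.2)) := by
    refine tendsto_const_nhds.congr' ?_
    filter_upwards [hχ_one p.1] with n hn
    rw [cutoffMul_apply, hn, one_mul]
  have integrable (h : integrableMap C(Y, ℝ) ν) : Integrable (fun p => h.1 p.1 p.2) π := by
    obtain ⟨k, hk⟩ := exists_integrableMap_eq_abs h
    have hk_nonneg (x : X) (y : Y) : 0 ≤ k.1 x y := (hk x y).symm ▸ abs_nonneg _
    have := integrable_of_nonneg_of_tendsto_integral
      (fun n => (cutoffMul (χ n) (hχ n) k.1).integrable) (fun n p =>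
        mul_nonneg (hχ_mem n p.1).1 (hk_nonneg p.1 p.2)) (measurable k) (tendsto_cutoffMul k)
      (tendsto_L k)
    simp only [hk] at this
    exact (integrable_norm_iff (measurable h)).1 this
  refine ⟨π, fun h => ⟨integrable h, tendsto_nhds_unique ?_ (tendsto_L h)⟩⟩
  refine tendsto_integral_of_dominated_convergence _
    (fun n => (cutoffMul (χ n) (hχ n) h.1).continuous.aestronglyMeasurable) (integrable h).norm
    (fun n => ae_of_all _ fun p => ?_) (ae_of_all _ (tendsto_cutoffMul h))
  rw [cutoffMul_apply, norm_mul, Real.norm_of_nonneg (hχ_mem n p.1).1]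
  exact mul_le_of_le_one_left (norm_nonneg _) (hχ_mem n p.1).2

end Riesz

section Kantorovich

variable {X Y : Type*} [TopologicalSpace X] [MeasurableSpace X] [TopologicalSpace Y]
  [CompactSpace Y] [MeasurableSpace Y] {ν : Measure X}

theorem isFiniteMeasure_of_forall_integrable [IsFiniteMeasure ν] {π : Measure (X × Y)}
    (hπ : ∀ h : integrableMap C(Y, ℝ) ν, Integrable (fun p => h.1 p.1 p.2) π) :
    IsFiniteMeasure π :=
  (integrable_const_iff_isFiniteMeasure one_ne_zero).1 (hπ (constMap C(Y, ℝ) ν 1))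

theorem map_fst_eq_of_forall_integral_le_supIntegral [SecondCountableTopology X]
    [HasOuterApproxClosed X] [BorelSpace X] [IsFiniteMeasure ν] [Nonempty Y]
    {π : Measure (X × Y)} [IsFiniteMeasure π]
    (hπ : ∀ h : integrableMap C(Y, ℝ) ν, ∫ p, h.1 p.1 p.2 ∂π ≤ supIntegral h) :
    π.map Prod.fst = ν := by
  have integral_le (u : X →ᵇ ℝ) : ∫ p, u p.1 ∂π ≤ ∫ x, u x ∂ν := by
    let h : integrableMap C(Y, ℝ) ν := ⟨ContinuousMap.const'.comp u.toContinuousMap,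
      .of_bound (ContinuousMap.continuous _).aestronglyMeasurable ‖u‖ (ae_of_all _ fun x =>
        (ContinuousMap.norm_le _ (norm_nonneg u)).2 fun _ => u.norm_coe_le_norm x)⟩
    simpa [h, supIntegral] using hπ h
  refine ext_of_forall_integral_eq_of_IsFiniteMeasure fun u => ?_
  rw [integral_map measurable_fst.aemeasurable u.continuous.aestronglyMeasurable]
  refine (integral_le u).antisymm ?_
  simpa [integral_neg] using integral_le (-u)

theorem exists_coupling_integral_eq_iInf [T2Space X] [LocallyCompactSpace X]
    [SecondCountableTopology X] [BorelSpace X] [T2Space Y] [SecondCountableTopology Y]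
    [BorelSpace Y] [Nonempty Y] [IsProbabilityMeasure ν] (ρ : Measure Y) [IsProbabilityMeasure ρ]
    (c : integrableMap C(Y, ℝ) ν) :
    ∃ π : Measure (X × Y), π.map Prod.fst = ν ∧ π.map Prod.snd = ρ ∧
      ∫ p, c.1 p.1 p.2 ∂π =
        ⨅ g : C(Y, ℝ), (supIntegral (c + constMap C(Y, ℝ) ν g) - ∫ y, g y ∂ρ) := by
  let ℓ : C(Y, ℝ) →ₗ[ℝ] ℝ :=
    { toFun g := ∫ y, g y ∂ρ
      map_add' g₁ g₂ := integral_add (integrable_continuousMap_of_compactSpace ρ g₁)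
        (integrable_continuousMap_of_compactSpace ρ g₂)
      map_smul' t g := integral_const_mul t _ }
  obtain ⟨L, hL_le, hL_const, hLc⟩ := exists_extension_le_sublinear_eq_sublinearRelaxation
    (N := supIntegral) (j := constMap C(Y, ℝ) ν) (ℓ := ℓ)
    (fun t ht => supIntegral_smul ht) supIntegral_add_le (integral_le_supIntegral_constMap ρ) c
  have hL_nonneg (h : integrableMap C(Y, ℝ) ν) (hh : ∀ x y, 0 ≤ h.1 x y) : 0 ≤ L h := by
    have := (hL_le (-h)).trans (supIntegral_nonpos fun x y => neg_nonpos.2 (hh x y))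
    rwa [map_neg, neg_nonpos] at this
  obtain ⟨π, hπ⟩ := exists_measure_forall_integral_eq L hL_nonneg fun h =>
    (hL_le h).trans (supIntegral_le_integral_norm h)
  have := isFiniteMeasure_of_forall_integrable fun h => (hπ h).1
  refine ⟨π, map_fst_eq_of_forall_integral_le_supIntegral fun h => (hπ h).2.trans_le (hL_le h),
    ext_of_forall_integral_eq_of_IsFiniteMeasure fun g => ?_, (hπ c).2.trans hLc⟩
  rw [integral_map measurable_snd.aemeasurable g.continuous.aestronglyMeasurable]
  exact (hπ (constMap C(Y, ℝ) ν g.toContinuousMap)).2.trans (hL_const g.toContinuousMap)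

end Kantorovich

section SupAffine

variable {E : Type*} [NormedAddCommGroup E] [InnerProductSpace ℝ E] {K : Set E}

/-- The maximum of the affine functions `x ↦ ⟪x, y⟫ + g y` with slopes `y ∈ K`, that is, the convex
conjugate of `-g`. -/
def supAffine (g : C(K, ℝ)) (x : E) : ℝ := ⨆ y : K, (⟪x, y⟫ + g y)

/-- The inner product `x ↦ (y ↦ ⟪x, y⟫)` in the curried form of the duality theorem. -/
def innerMap (K : Set E) : C(E, C(K, ℝ)) :=
  ContinuousMap.curry ⟨fun p : E × K => ⟪p.1, (p.2 : E)⟫, by fun_prop⟩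

variable [CompactSpace K]

theorem inner_add_le_supAffine (g : C(K, ℝ)) (x : E) (y : K) : ⟪x, y⟫ + g y ≤ supAffine g x :=
  le_iSup_of_compactSpace (innerMap K x + g) y

theorem convexOn_supAffine [Nonempty K] (g : C(K, ℝ)) : ConvexOn ℝ Set.univ (supAffine g) := by
  refine ⟨convex_univ, fun x _ z _ a b ha hb hab => ciSup_le fun y => ?_⟩
  calc ⟪a • x + b • z, y⟫ + g y
      = a * (⟪x, y⟫ + g y) + b * (⟪z, y⟫ + g y) := by
        rw [inner_add_left, real_inner_smul_left, real_inner_smul_left]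
        linear_combination -g y * hab
    _ ≤ a * supAffine g x + b * supAffine g z := by
        gcongr <;> exact inner_add_le_supAffine g _ y

variable [MeasurableSpace E] [OpensMeasurableSpace E] [SecondCountableTopology E] {α : Measure E}

theorem integrable_innerMap (hα : Integrable (fun x => ‖x‖) α) : Integrable (innerMap K) α := by
  obtain ⟨R, hR⟩ := (isCompact_iff_compactSpace.2 ‹CompactSpace K›).isBounded.exists_norm_le
  refine (hα.mul_const (max R 0)).mono' (innerMap K).continuous.aestronglyMeasurable
    (ae_of_all _ fun x => (ContinuousMap.norm_le _ (by positivity)).2 fun y => ?_)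
  exact (norm_inner_le_norm x (y : E)).trans (by gcongr; exact (hR y y.2).trans (le_max_left _ _))

theorem integrable_supAffine [Nonempty K] [IsFiniteMeasure α] (hα : Integrable (fun x => ‖x‖) α)
    (g : C(K, ℝ)) : Integrable (supAffine g) α :=
  integrable_iSup_of_compactSpace ((integrable_innerMap hα).add (integrable_const g))

theorem integral_inner_le_integral_supAffine_sub [Nonempty K] {π : Measure (E × K)}
    [IsFiniteMeasure π] (hπ : Integrable (fun x => ‖x‖) (π.map Prod.fst)) (g : C(K, ℝ)) :
    ∫ p, ⟪p.1, (p.2 : E)⟫ ∂π ≤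
      ∫ x, supAffine g x ∂π.map Prod.fst - ∫ y, g y ∂π.map Prod.snd := by
  have integrable_fst : Integrable (fun p => supAffine g p.1) π :=
    (integrable_supAffine hπ g).comp_measurable measurable_fst
  have integrable_snd : Integrable (fun p : E × K => g p.2) π :=
    (integrable_continuousMap_of_compactSpace _ g).comp_measurable measurable_snd
  have integrable_inner : Integrable (fun p : E × K => ⟪p.1, (p.2 : E)⟫) π :=
    ((integrable_innerMap (K := K) hπ).comp_measurable measurable_fst).norm.mono'
      (innerMap K).uncurry.continuous.aestronglyMeasurable
      (ae_of_all _ fun p => (innerMap K p.1).norm_coe_le_norm p.2)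
  rw [integral_map measurable_fst.aemeasurable (integrable_supAffine hπ g).1,
    integral_map measurable_snd.aemeasurable g.continuous.aestronglyMeasurable,
    ← integral_sub integrable_fst integrable_snd]
  exact integral_mono integrable_inner (integrable_fst.sub integrable_snd) fun p =>
    le_sub_iff_add_le.2 (inner_add_le_supAffine g p.1 p.2)

end SupAffine

section OTcost

theorem exists_measure_map_prodMap_eq {Ω Y Z : Type*} [MeasurableSpace Ω] [MeasurableSpace Y]
    [MeasurableSpace Z] {e : Y → Z} (he : MeasurableEmbedding e) {π : Measure (Ω × Z)}
    {ρ : Measure Y} (hπ : π.map Prod.snd = ρ.map e) :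
    ∃ π' : Measure (Ω × Y), π'.map (Prod.map id e) = π ∧ π'.map Prod.snd = ρ := by
  have prod_emb : MeasurableEmbedding (Prod.map (id : Ω → Ω) e) := MeasurableEmbedding.id.prodMap he
  have map_comap : (π.comap (Prod.map id e)).map (Prod.map id e) = π := by
    rw [prod_emb.map_comap]
    refine Measure.restrict_eq_self_of_ae_mem ?_
    have h_range : ∀ᵐ z ∂π.map Prod.snd, z ∈ Set.range e := by
      rw [hπ, he.ae_map_iff]
      exact ae_of_all _ Set.mem_range_self
    filter_upwards [ae_of_ae_map measurable_snd.aemeasurable h_range] with ⟨x, _⟩ ⟨y, hy⟩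
    exact ⟨(x, y), Prod.ext rfl hy⟩
  refine ⟨_, map_comap, ?_⟩
  rw [← he.comap_map (Measure.map Prod.snd _), ← he.comap_map ρ, ← hπ,
    Measure.map_map he.measurable measurable_snd]
  conv_rhs => rw [← map_comap, Measure.map_map measurable_snd prod_emb.measurable]
  rfl

variable {d : ℕ} {K : Set (EuclideanSpace ℝ (Fin d))} [CompactSpace K] [Nonempty K]
  {α : Measure (EuclideanSpace ℝ (Fin d))} [IsProbabilityMeasure α]
  {ρ : Measure K} [IsProbabilityMeasure ρ]

theorem integral_inner_le_of_mem_couplings (hα : Integrable (fun x => ‖x‖) α)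
    {π : Measure (EuclideanSpace ℝ (Fin d) × EuclideanSpace ℝ (Fin d))}
    (hπ : π ∈ Couplings α (ρ.map (↑))) (g : C(K, ℝ)) :
    ∫ p, ⟪p.1, p.2⟫ ∂π ≤ ∫ x, supAffine g x ∂α - ∫ y, g y ∂ρ := by
  obtain ⟨hπ_fst, hπ_snd⟩ := hπ
  have hK : MeasurableSet K := (isCompact_iff_compactSpace.2 ‹_›).measurableSet
  obtain ⟨π', rfl, rfl⟩ :=
    exists_measure_map_prodMap_eq (MeasurableEmbedding.subtype_coe hK) hπ_snd
  rw [Measure.map_map (by fun_prop) (by fun_prop)] at hπ_fst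
  obtain rfl : π'.map Prod.fst = α := hπ_fst
  have := Measure.isFiniteMeasure_of_map (μ := π') measurable_fst.aemeasurable
  rw [integral_map (by fun_prop) (by fun_prop)]
  exact integral_inner_le_integral_supAffine_sub hα g

theorem OTcost_map_subtypeVal_le (hα : Integrable (fun x => ‖x‖) α) (g : C(K, ℝ)) :
    OTcost α (ρ.map (↑)) ≤ ∫ x, supAffine g x ∂α - ∫ y, g y ∂ρ := by
  have : IsProbabilityMeasure (ρ.map ((↑) : K → EuclideanSpace ℝ (Fin d))) :=
    Measure.isProbabilityMeasure_map (by fun_prop)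
  refine csSup_le ⟨_, α.prod (ρ.map (↑)), ⟨?_, ?_⟩, rfl⟩ ?_
  · simp
  · simp
  · rintro _ ⟨π, hπ, rfl⟩
    exact integral_inner_le_of_mem_couplings hα hπ g

theorem integral_inner_le_OTcost_map_subtypeVal (hα : Integrable (fun x => ‖x‖) α)
    {π : Measure (EuclideanSpace ℝ (Fin d) × K)} (hπ_fst : π.map Prod.fst = α)
    (hπ_snd : π.map Prod.snd = ρ) :
    ∫ p, ⟪p.1, (p.2 : EuclideanSpace ℝ (Fin d))⟫ ∂π ≤ OTcost α (ρ.map (↑)) := by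
  refine le_csSup ⟨∫ x, supAffine (0 : C(K, ℝ)) x ∂α - ∫ y, (0 : C(K, ℝ)) y ∂ρ, ?_⟩
    ⟨π.map (Prod.map id (↑)), ⟨?_, ?_⟩, ?_⟩
  · rintro _ ⟨π, hπ, rfl⟩
    exact integral_inner_le_of_mem_couplings hα hπ 0
  · rw [Measure.map_map (by fun_prop) (by fun_prop), ← hπ_fst]
    rfl
  · rw [Measure.map_map (by fun_prop) (by fun_prop), ← hπ_snd,
      Measure.map_map (by fun_prop) (by fun_prop)]
    rfl
  · rw [integral_map (by fun_prop) (by fun_prop)]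
    rfl

theorem OTcost_map_subtypeVal_eq_iInf (hα : Integrable (fun x => ‖x‖) α) :
    OTcost α (ρ.map (↑)) = ⨅ g : C(K, ℝ), (∫ x, supAffine g x ∂α - ∫ y, g y ∂ρ) := by
  refine (le_ciInf (OTcost_map_subtypeVal_le hα)).antisymm ?_
  obtain ⟨π, hπ_fst, hπ_snd, hπ⟩ :=
    exists_coupling_integral_eq_iInf ρ ⟨innerMap K, integrable_innerMap hα⟩
  exact hπ.symm.trans_le (integral_inner_le_OTcost_map_subtypeVal hα hπ_fst hπ_snd)

end OTcost

section Argmax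

theorem exists_measurable_argmax {Ω Y : Type*} [MeasurableSpace Ω] [MeasurableSpace Y] [Finite Y]
    [Nonempty Y] {F : Y → Ω → ℝ} (hF : ∀ y, Measurable (F y)) :
    ∃ i : Ω → Y, Measurable i ∧ ∀ x y, F y x ≤ F (i x) x := by
  classical
  obtain ⟨e, he⟩ := exists_surjective_nat Y
  have exists_argmax (x : Ω) : ∃ n, ∀ y, F y x ≤ F (e n) x :=
    he.exists.1 (Finite.exists_max fun y => F y x)
  have measurableSet_argmax (n : ℕ) : MeasurableSet {x | ∀ y, F y x ≤ F (e n) x} := by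
    rw [Set.ofPred_forall]
    exact .iInter fun y => measurableSet_le (hF y) (hF (e n))
  exact ⟨fun x => e (Nat.find (exists_argmax x)),
    measurable_from_nat.comp (measurable_find exists_argmax measurableSet_argmax),
    fun x => Nat.find_spec (exists_argmax x)⟩

theorem integral_supAffine_sub_eq_integral_inner {E : Type*} [NormedAddCommGroup E]
    [InnerProductSpace ℝ E] [MeasurableSpace E] [OpensMeasurableSpace E]
    [SecondCountableTopology E] {K : Set E} [CompactSpace K] [Nonempty K] {α : Measure E}
    [IsFiniteMeasure α] (hα : Integrable (fun x => ‖x‖) α) {g : C(K, ℝ)} {i : E → K}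
    (hi : Measurable i) (h_argmax : ∀ x, ∀ y : K, ⟪x, (y : E)⟫ + g y ≤ ⟪x, (i x : E)⟫ + g (i x)) :
    ∫ x, supAffine g x ∂α - ∫ y, g y ∂α.map i = ∫ x, ⟪x, (i x : E)⟫ ∂α := by
  have supAffine_eq (x : E) : supAffine g x = ⟪x, (i x : E)⟫ + g (i x) :=
    (ciSup_le (h_argmax x)).antisymm (inner_add_le_supAffine g x (i x))
  have integrable_comp : Integrable (fun x => g (i x)) α :=
    (integrable_continuousMap_of_compactSpace _ g).comp_measurable hi
  rw [integral_map hi.aemeasurable g.continuous.aestronglyMeasurable,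
    ← integral_sub (integrable_supAffine hα g) integrable_comp]
  simp only [supAffine_eq, add_sub_cancel_right]

theorem exists_OTcost_map_subtypeVal_sub_le {d : ℕ} {K : Set (EuclideanSpace ℝ (Fin d))} [Finite K]
    [Nonempty K] {μ ν : Measure (EuclideanSpace ℝ (Fin d))} [IsProbabilityMeasure μ]
    [IsProbabilityMeasure ν] (hμ : Integrable (fun x => ‖x‖) μ) (hν : Integrable (fun x => ‖x‖) ν)
    (g : C(K, ℝ)) :
    ∃ ρ : Measure K, IsProbabilityMeasure ρ ∧
      OTcost ν (ρ.map (↑)) - OTcost μ (ρ.map (↑)) ≤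
        ∫ x, supAffine g x ∂ν - ∫ x, supAffine g x ∂μ := by
  obtain ⟨i, hi, h_argmax⟩ := exists_measurable_argmax
    (F := fun (y : K) x => ⟪x, (y : EuclideanSpace ℝ (Fin d))⟫ + g y) (fun y => by fun_prop)
  have hi_pair : Measurable fun x => (x, i x) := measurable_id.prodMk hi
  have : IsProbabilityMeasure (μ.map i) := Measure.isProbabilityMeasure_map hi.aemeasurable
  have le_OTcost_μ : ∫ x, ⟪x, (i x : EuclideanSpace ℝ (Fin d))⟫ ∂μ ≤
      OTcost μ ((μ.map i).map (↑)) := by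
    rw [← integral_map hi_pair.aemeasurable (f := fun p => ⟪p.1, (p.2 : EuclideanSpace ℝ (Fin d))⟫)
      (by fun_prop)]
    refine integral_inner_le_OTcost_map_subtypeVal hμ ?_ ?_
    · rw [Measure.map_map measurable_fst hi_pair]
      exact Measure.map_id
    · rw [Measure.map_map measurable_snd hi_pair]
      rfl
  refine ⟨μ.map i, this, ?_⟩
  linarith [OTcost_map_subtypeVal_le (ρ := μ.map i) hν g,
    integral_supAffine_sub_eq_integral_inner hμ hi h_argmax]

end Argmax

section Approximation

variable {E : Type*} [NormedAddCommGroup E] [InnerProductSpace ℝ E]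

theorem exists_seq_isLUB_inner_add [CompleteSpace E] [SecondCountableTopology E] {f : E → ℝ}
    (hf : ConvexOn ℝ Set.univ f) (hf_cont : Continuous f) :
    ∃ (a : ℕ → E) (c : E → ℝ), ∀ x, IsLUB (Set.range fun i => ⟪x, a i⟫ + c (a i)) (f x) := by
  obtain ⟨l, b, hle, hsup⟩ := hf.real_univ_sSup_of_nat_affine_eq hf_cont.lowerSemicontinuous
  let a (i : ℕ) : E := (InnerProductSpace.toDual ℝ E).symm (l i)
  have inner_a (i : ℕ) (x : E) : ⟪x, a i⟫ = l i x := by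
    rw [real_inner_comm]
    exact InnerProductSpace.toDual_symm_apply
  have b_le (i : ℕ) (x : E) : b i ≤ f x - ⟪x, a i⟫ := by
    rw [inner_a]
    exact le_sub_iff_add_le'.2 (hle i x)
  refine ⟨a, fun y => ⨅ x, (f x - ⟪x, y⟫), fun x => ⟨?_, fun r hr => ?_⟩⟩
  · rintro _ ⟨i, rfl⟩
    exact le_sub_iff_add_le'.1 (ciInf_le ⟨b i, Set.forall_mem_range.2 (b_le i)⟩ x)
  · rw [← hsup, iSup_apply]
    refine ciSup_le fun i => le_trans ?_ (hr ⟨i, rfl⟩)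
    change l i x + b i ≤ _
    rw [← inner_a]
    exact add_le_add_right (le_ciInf (b_le i)) _

theorem exists_seq_supAffine_tendsto [CompleteSpace E] [SecondCountableTopology E] {f : E → ℝ}
    (hf : ConvexOn ℝ Set.univ f) (hf_cont : Continuous f) :
    ∃ (K : ℕ → Set E) (g : ∀ n, C(K n, ℝ)), (∀ n, Finite (K n)) ∧ (∀ n, Nonempty (K n)) ∧
      (∀ x, Monotone fun n => supAffine (g n) x) ∧
      ∀ x, Tendsto (fun n => supAffine (g n) x) atTop (𝓝 (f x)) := by
  obtain ⟨a, c, h_lub⟩ := exists_seq_isLUB_inner_add hf hf_cont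
  let K (n : ℕ) : Set E := a '' Set.Iic n
  have K_finite (n : ℕ) : Finite (K n) := ((Set.finite_Iic n).image a).to_subtype
  have K_nonempty (n : ℕ) : Nonempty (K n) := (Set.nonempty_Iic.image a).to_subtype
  let g (n : ℕ) : C(K n, ℝ) := ⟨fun y => c y, continuous_of_discreteTopology⟩
  have h_mono (x : E) : Monotone fun n => supAffine (g n) x := fun m n hmn =>
    ciSup_le fun y =>
      inner_add_le_supAffine (g n) x ⟨y, Set.image_mono (Set.Iic_subset_Iic.2 hmn) y.2⟩
  refine ⟨K, g, K_finite, K_nonempty, h_mono, fun x =>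
    tendsto_atTop_isLUB (h_mono x) ⟨?_, fun r hr => (h_lub x).2 ?_⟩⟩
  · rintro _ ⟨n, rfl⟩
    refine ciSup_le ?_
    rintro ⟨_, i, _, rfl⟩
    exact (h_lub x).1 ⟨i, rfl⟩
  · rintro _ ⟨i, rfl⟩
    exact (inner_add_le_supAffine (g i) x ⟨a i, i, Set.self_mem_Iic, rfl⟩).trans (hr ⟨i, rfl⟩)

end Approximation

section Duality

theorem exists_measure_map_subtypeVal_eq {Ω : Type*} [MeasurableSpace Ω] {K : Set Ω}
    (hK : MeasurableSet K) {ρ : Measure Ω} [IsProbabilityMeasure ρ] (hρ : ρ Kᶜ = 0) :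
    ∃ ρ' : Measure K, IsProbabilityMeasure ρ' ∧ ρ'.map (↑) = ρ := by
  have map_comap : (ρ.comap ((↑) : K → Ω)).map (↑) = ρ := by
    rw [map_comap_subtype_coe hK, Measure.restrict_eq_self_of_ae_mem (mem_ae_iff.2 hρ)]
  refine ⟨_, ?_, map_comap⟩
  rw [← Measure.isProbabilityMeasure_map_iff (f := ((↑) : K → Ω)) (by fun_prop), map_comap]
  infer_instance

variable {d : ℕ} {μ ν : Measure (EuclideanSpace ℝ (Fin d))} [IsProbabilityMeasure μ]
  [IsProbabilityMeasure ν]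

theorem exists_convexOn_integral_sub_lt (hμ : Integrable (fun x => ‖x‖) μ)
    (hν : Integrable (fun x => ‖x‖) ν) {ρ : Measure (EuclideanSpace ℝ (Fin d))}
    [IsProbabilityMeasure ρ] {R : ℝ} (hρ : ρ (closedBall 0 R)ᶜ = 0) {r : ℝ}
    (hr : OTcost ν ρ - OTcost μ ρ < r) :
    ∃ f : EuclideanSpace ℝ (Fin d) → ℝ, ConvexOn ℝ Set.univ f ∧ Integrable f μ ∧ Integrable f ν ∧
      ∫ x, f x ∂ν - ∫ x, f x ∂μ < r := by
  obtain ⟨ρ', _, rfl⟩ := exists_measure_map_subtypeVal_eq measurableSet_closedBall hρ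
  have := ρ'.nonempty_of_neZero
  have := isCompact_iff_compactSpace.1 (isCompact_closedBall (0 : EuclideanSpace ℝ (Fin d)) R)
  rw [OTcost_map_subtypeVal_eq_iInf hν] at hr
  obtain ⟨g, hg⟩ := exists_lt_of_ciInf_lt (sub_lt_iff_lt_add.1 hr)
  refine ⟨supAffine g, convexOn_supAffine g, integrable_supAffine hμ g, integrable_supAffine hν g,
    ?_⟩
  linarith [OTcost_map_subtypeVal_le (ρ := ρ') hμ g]

theorem exists_boundedSupport_OTcost_sub_le (hμ : Integrable (fun x => ‖x‖) μ)
    (hν : Integrable (fun x => ‖x‖) ν) {K : Set (EuclideanSpace ℝ (Fin d))} [Finite K] [Nonempty K]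
    (g : C(K, ℝ)) :
    ∃ ρ : Measure (EuclideanSpace ℝ (Fin d)), IsProbabilityMeasure ρ ∧
      (∃ R : ℝ, ρ (closedBall 0 R)ᶜ = 0) ∧
      OTcost ν ρ - OTcost μ ρ ≤ ∫ x, supAffine g x ∂ν - ∫ x, supAffine g x ∂μ := by
  obtain ⟨ρ, _, hρ⟩ := exists_OTcost_map_subtypeVal_sub_le hμ hν g
  obtain ⟨R, hR⟩ := K.toFinite.isBounded.subset_closedBall 0
  refine ⟨ρ.map (↑), Measure.isProbabilityMeasure_map (by fun_prop), ⟨R, ?_⟩, hρ⟩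
  rw [Measure.map_apply (by fun_prop) measurableSet_closedBall.compl, Set.preimage_compl,
    Set.preimage_eq_univ_iff.2 (Subtype.range_coe ▸ hR), Set.compl_univ, measure_empty]

theorem exists_seq_integral_supAffine_sub_tendsto (hμ : Integrable (fun x => ‖x‖) μ)
    (hν : Integrable (fun x => ‖x‖) ν) {f : EuclideanSpace ℝ (Fin d) → ℝ}
    (hf : ConvexOn ℝ Set.univ f) (hfμ : Integrable f μ) (hfν : Integrable f ν) :
    ∃ (K : ℕ → Set (EuclideanSpace ℝ (Fin d))) (g : ∀ n, C(K n, ℝ)),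
      (∀ n, Finite (K n)) ∧ (∀ n, Nonempty (K n)) ∧
      Tendsto (fun n => ∫ x, supAffine (g n) x ∂ν - ∫ x, supAffine (g n) x ∂μ) atTop
        (𝓝 (∫ x, f x ∂ν - ∫ x, f x ∂μ)) := by
  obtain ⟨K, g, K_finite, K_nonempty, h_mono, h_lim⟩ :=
    exists_seq_supAffine_tendsto hf hf.locallyLipschitz.continuous
  refine ⟨K, g, K_finite, K_nonempty, .sub ?_ ?_⟩
  · exact integral_tendsto_of_tendsto_of_monotone (fun n => integrable_supAffine hν (g n)) hfν
      (ae_of_all _ h_mono) (ae_of_all _ h_lim)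
  · exact integral_tendsto_of_tendsto_of_monotone (fun n => integrable_supAffine hμ (g n)) hfμ
      (ae_of_all _ h_mono) (ae_of_all _ h_lim)

end Duality

theorem stmt9 (d : ℕ) (hd : 1 ≤ d)
    (μ ν : Measure (EuclideanSpace ℝ (Fin d)))
    [IsProbabilityMeasure μ] [IsProbabilityMeasure ν]
    (hμ : Integrable (fun x => ‖x‖) μ) (hν : Integrable (fun y => ‖y‖) ν) :
    sInf {r : EReal | ∃ f : EuclideanSpace ℝ (Fin d) → ℝ,
        ConvexOn ℝ Set.univ f ∧ Integrable f μ ∧ Integrable f ν ∧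
        r = ((∫ x, f x ∂ν - ∫ x, f x ∂μ : ℝ) : EReal)}
      = sInf {r : EReal | ∃ ρ : Measure (EuclideanSpace ℝ (Fin d)),
        IsProbabilityMeasure ρ ∧
        (∃ R : ℝ, ρ (closedBall (0 : EuclideanSpace ℝ (Fin d)) R)ᶜ = 0) ∧
        r = ((OTcost ν ρ - OTcost μ ρ : ℝ) : EReal)} := by
  refine le_antisymm (le_sInf ?_) (le_sInf ?_)
  · rintro _ ⟨ρ, _, ⟨R, hR⟩, rfl⟩
    refine EReal.le_of_forall_lt_iff_le.1 fun r hr => ?_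
    obtain ⟨f, hf, hfμ, hfν, hf_lt⟩ :=
      exists_convexOn_integral_sub_lt hμ hν hR (EReal.coe_lt_coe_iff.1 hr)
    exact sInf_le_of_le ⟨f, hf, hfμ, hfν, rfl⟩ (EReal.coe_le_coe_iff.2 hf_lt.le)
  · rintro _ ⟨f, hf, hfμ, hfν, rfl⟩
    obtain ⟨K, g, _, _, h_lim⟩ := exists_seq_integral_supAffine_sub_tendsto hμ hν hf hfμ hfν
    refine ge_of_tendsto' ((continuous_coe_real_ereal.tendsto _).comp h_lim) fun n => ?_
    obtain ⟨ρ, hρ, hR, h_le⟩ := exists_boundedSupport_OTcost_sub_le hμ hν (g n)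
    exact sInf_le_of_le ⟨ρ, hρ, hR, rfl⟩ (EReal.coe_le_coe_iff.2 h_le)
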